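/- There is a constant C > 0, depending only on the dimension d, such that the following holds. Let u ∈ K_ob be of class C² on closure(B₁). Then F_ob(u) ≥ F_ob(φ) and (F_ob(u) − F_ob(φ))^{1/2} ≤ C ‖∇F_ob(u)‖_K. (Constrained Łojasiewicz inequality with exponent γ = 1/2 for the obstacle problem in the unit ball.) -/

import Mathlib

open MeasureTheory Filter Topology Set
open scoped RealInnerProductSpace

/-- The Laplacian of `u : ℝ^d → ℝ`, as the sum of the pure second derivatives
in the coordinate directions (junk value where `u` is not twice differentiable). -/
noncomputable def lapl {d : ℕ} (u : EuclideanSpace ℝ (Fin d) → ℝ)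
    (x : EuclideanSpace ℝ (Fin d)) : ℝ :=
  ∑ i : Fin d, iteratedFDeriv ℝ 2 u x ![EuclideanSpace.single i 1, EuclideanSpace.single i 1]

/-- The obstacle energy `F_ob(u) = (1/2)∫_{B₁}|∇u|² + ∫_{B₁} u`. -/
noncomputable def Fob (d : ℕ) (u : EuclideanSpace ℝ (Fin d) → ℝ) : ℝ :=
  (1/2) * (∫ x in Metric.ball (0 : EuclideanSpace ℝ (Fin d)) 1, ‖gradient u x‖ ^ 2) +
    ∫ x in Metric.ball (0 : EuclideanSpace ℝ (Fin d)) 1, u x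

/-- The admissible class `K_ob` of the obstacle problem: continuous functions on the closed
unit ball, nonnegative in `B₁`, equal to `g` on `∂B₁`. -/
def MemKob (d : ℕ) (g u : EuclideanSpace ℝ (Fin d) → ℝ) : Prop :=
  ContinuousOn u (Metric.closedBall (0 : EuclideanSpace ℝ (Fin d)) 1) ∧
  (∀ x ∈ Metric.ball (0 : EuclideanSpace ℝ (Fin d)) 1, 0 ≤ u x) ∧
  ∀ x ∈ Metric.sphere (0 : EuclideanSpace ℝ (Fin d)) 1, u x = g x

/-- The constrained norm `‖∇F_ob(u)‖_K`: `max(0, sup)` over `v ∈ K_ob` with `v ≠ u` in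
`L²(B₁)` of `(∫_{B₁}(v - u)(Δu - 1))/‖v - u‖_{L²(B₁)}`. -/
noncomputable def KnormOb (d : ℕ) (g u : EuclideanSpace ℝ (Fin d) → ℝ) : ℝ :=
  max 0 (sSup {r : ℝ | ∃ v : EuclideanSpace ℝ (Fin d) → ℝ, MemKob d g v ∧
    (∫ x in Metric.ball (0 : EuclideanSpace ℝ (Fin d)) 1, (v x - u x) ^ 2) ≠ 0 ∧
    r = (∫ x in Metric.ball (0 : EuclideanSpace ℝ (Fin d)) 1, (v x - u x) * (lapl u x - 1)) /
        Real.sqrt (∫ x in Metric.ball (0 : EuclideanSpace ℝ (Fin d)) 1, (v x - u x) ^ 2)})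


/-- Functions which coincide on the open unit ball with a function continuous on its closure. -/
def CE (d : ℕ) (f : EuclideanSpace ℝ (Fin d) → ℝ) : Prop :=
  ∃ F : EuclideanSpace ℝ (Fin d) → ℝ,
    ContinuousOn F (Metric.closedBall (0 : EuclideanSpace ℝ (Fin d)) 1) ∧
    ∀ x ∈ Metric.ball (0 : EuclideanSpace ℝ (Fin d)) 1, f x = F x

section
variable {d : ℕ} {f h : EuclideanSpace ℝ (Fin d) → ℝ}

lemma CE.of_cont (hf : ContinuousOn f (Metric.closedBall (0 : EuclideanSpace ℝ (Fin d)) 1)) :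
    CE d f := ⟨f, hf, fun _ _ => rfl⟩

lemma CE.add (hf : CE d f) (hh : CE d h) : CE d (fun x => f x + h x) := by
  obtain ⟨F, hF, hF'⟩ := hf
  obtain ⟨H, hH, hH'⟩ := hh
  exact ⟨fun x => F x + H x, hF.add hH, fun x hx => by simp only [hF' x hx, hH' x hx]⟩

lemma CE.sub (hf : CE d f) (hh : CE d h) : CE d (fun x => f x - h x) := by
  obtain ⟨F, hF, hF'⟩ := hf
  obtain ⟨H, hH, hH'⟩ := hh
  exact ⟨fun x => F x - H x, hF.sub hH, fun x hx => by simp only [hF' x hx, hH' x hx]⟩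

lemma CE.mul (hf : CE d f) (hh : CE d h) : CE d (fun x => f x * h x) := by
  obtain ⟨F, hF, hF'⟩ := hf
  obtain ⟨H, hH, hH'⟩ := hh
  exact ⟨fun x => F x * H x, hF.mul hH, fun x hx => by simp only [hF' x hx, hH' x hx]⟩

lemma CE.pow (hf : CE d f) (n : ℕ) : CE d (fun x => f x ^ n) := by
  obtain ⟨F, hF, hF'⟩ := hf
  exact ⟨fun x => F x ^ n, hF.pow n, fun x hx => by simp only [hF' x hx]⟩

lemma CE.const (c : ℝ) : CE d (fun _ => c) := CE.of_cont continuousOn_const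

lemma CE.sum {f : Fin d → EuclideanSpace ℝ (Fin d) → ℝ} (hf : ∀ i, CE d (f i)) :
    CE d (fun x => ∑ i, f i x) := by
  choose F hF hF' using hf
  exact ⟨fun x => ∑ i, F i x, continuousOn_finsetSum _ (fun i _ => hF i),
    fun x hx => Finset.sum_congr rfl (fun i _ => hF' i x hx)⟩

lemma CE.integrable (hf : CE d f) :
    IntegrableOn f (Metric.ball (0 : EuclideanSpace ℝ (Fin d)) 1) := by
  obtain ⟨F, hF, hF'⟩ := hf
  have h1 : IntegrableOn F (Metric.ball (0 : EuclideanSpace ℝ (Fin d)) 1) :=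
    (hF.integrableOn_compact (isCompact_closedBall _ _)).mono_set Metric.ball_subset_closedBall
  exact h1.congr_fun (fun x hx => (hF' x hx).symm) measurableSet_ball

lemma uniq_ball : UniqueDiffOn ℝ (Metric.closedBall (0 : EuclideanSpace ℝ (Fin d)) 1) :=
  uniqueDiffOn_convex (convex_closedBall _ _)
    ⟨0, Metric.ball_subset_interior_closedBall (by simp)⟩

lemma cb_nhds {x : EuclideanSpace ℝ (Fin d)} (hx : x ∈ Metric.ball (0 : EuclideanSpace ℝ (Fin d)) 1) :
    Metric.closedBall (0 : EuclideanSpace ℝ (Fin d)) 1 ∈ 𝓝 x :=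
  mem_of_superset (Metric.isOpen_ball.mem_nhds hx) Metric.ball_subset_closedBall

lemma CE.fderiv (hf : ContDiffOn ℝ 1 f (Metric.closedBall (0 : EuclideanSpace ℝ (Fin d)) 1))
    (v : EuclideanSpace ℝ (Fin d)) : CE d (fun x => fderiv ℝ f x v) :=
  ⟨fun x => fderivWithin ℝ f (Metric.closedBall (0 : EuclideanSpace ℝ (Fin d)) 1) x v,
    (hf.continuousOn_fderivWithin uniq_ball le_rfl).clm_apply continuousOn_const,
    fun x hx => by simp only [fderivWithin_of_mem_nhds (cb_nhds hx)]⟩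

lemma diffAt (hf : ContDiffOn ℝ 1 f (Metric.closedBall (0 : EuclideanSpace ℝ (Fin d)) 1))
    {x : EuclideanSpace ℝ (Fin d)} (hx : x ∈ Metric.ball (0 : EuclideanSpace ℝ (Fin d)) 1) :
    DifferentiableAt ℝ f x :=
  (hf.contDiffAt (cb_nhds hx)).differentiableAt (by simp)

/-- Extension by zero is Lipschitz. -/
lemma lip_ext (hf : ContDiffOn ℝ 1 f (Metric.closedBall (0 : EuclideanSpace ℝ (Fin d)) 1))
    (h0 : ∀ x ∈ Metric.sphere (0 : EuclideanSpace ℝ (Fin d)) 1, f x = 0) :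
    ∃ K, LipschitzWith K
      (indicator (Metric.closedBall (0 : EuclideanSpace ℝ (Fin d)) 1) f) := by
  obtain ⟨C, hC⟩ := (isCompact_closedBall (0 : EuclideanSpace ℝ (Fin d)) 1).exists_bound_of_continuousOn
    (hf.continuousOn_fderivWithin uniq_ball le_rfl)
  have hL : LipschitzOnWith C.toNNReal f (Metric.closedBall (0 : EuclideanSpace ℝ (Fin d)) 1) := by
    refine Convex.lipschitzOnWith_of_nnnorm_fderivWithin_le (𝕜 := ℝ)
      (hf.differentiableOn (by simp)) (fun x hx => ?_) (convex_closedBall _ _)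
    rw [← NNReal.coe_le_coe, coe_nnnorm]
    exact (hC x hx).trans (Real.le_coe_toNNReal C)
  refine ⟨C.toNNReal, LipschitzWith.of_dist_le_mul ?_⟩
  have key : ∀ x ∈ Metric.closedBall (0 : EuclideanSpace ℝ (Fin d)) 1,
      ∀ y ∉ Metric.closedBall (0 : EuclideanSpace ℝ (Fin d)) 1,
      dist (f x) 0 ≤ C.toNNReal * dist x y := by
    intro x hx y hy
    have hx1 : ‖x‖ ≤ 1 := by simpa using hx
    have hy1 : 1 ≤ ‖y‖ := by
      have : 1 < ‖y‖ := by simpa using hy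
      exact this.le
    obtain ⟨z, hz, hz1⟩ := (convex_segment x y).isPreconnected.intermediate_value
      (left_mem_segment ℝ x y) (right_mem_segment ℝ x y) continuous_norm.continuousOn ⟨hx1, hy1⟩
    have hzs : z ∈ Metric.sphere (0 : EuclideanSpace ℝ (Fin d)) 1 := by simpa using hz1
    have h1 := hL.dist_le_mul x hx z (Metric.sphere_subset_closedBall hzs)
    rw [h0 z hzs] at h1
    have h2 := dist_add_dist_of_mem_segment hz
    refine h1.trans (mul_le_mul_of_nonneg_left ?_ C.toNNReal.coe_nonneg)
    have := dist_nonneg (x := z) (y := y)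
    linarith
  intro x y
  by_cases hx : x ∈ Metric.closedBall (0 : EuclideanSpace ℝ (Fin d)) 1 <;>
  by_cases hy : y ∈ Metric.closedBall (0 : EuclideanSpace ℝ (Fin d)) 1
  · rw [indicator_of_mem hx, indicator_of_mem hy]
    exact hL.dist_le_mul x hx y hy
  · rw [indicator_of_mem hx, indicator_of_notMem hy]
    exact key x hx y hy
  · rw [indicator_of_notMem hx, indicator_of_mem hy, dist_comm, dist_comm x y]
    exact key y hy x hx
  · rw [indicator_of_notMem hx, indicator_of_notMem hy, dist_self]
    positivity

lemma int_fderiv_zero (hf : ContDiffOn ℝ 1 f (Metric.closedBall (0 : EuclideanSpace ℝ (Fin d)) 1))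
    (h0 : ∀ x ∈ Metric.sphere (0 : EuclideanSpace ℝ (Fin d)) 1, f x = 0)
    (v : EuclideanSpace ℝ (Fin d)) :
    ∫ x in Metric.ball (0 : EuclideanSpace ℝ (Fin d)) 1, fderiv ℝ f x v = 0 := by
  obtain ⟨K, hK⟩ := lip_ext hf h0
  have hs : HasCompactSupport (indicator (Metric.closedBall (0 : EuclideanSpace ℝ (Fin d)) 1) f) :=
    HasCompactSupport.intro (isCompact_closedBall _ _) (fun x hx => indicator_of_notMem hx f)
  have h1 := LipschitzWith.integral_lineDeriv_mul_eq (μ := volume)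
    (LipschitzWith.const (1:ℝ) : LipschitzWith 0 (fun _ : EuclideanSpace ℝ (Fin d) => (1:ℝ))) hK hs (-v)
  have h2 : ∀ x : EuclideanSpace ℝ (Fin d), lineDeriv ℝ (fun _ : EuclideanSpace ℝ (Fin d) => (1:ℝ)) x (-v) = 0 := by
    intro x; simp [lineDeriv]
  simp only [h2, zero_mul, integral_zero, neg_neg, mul_one] at h1
  rw [h1, ← integral_indicator measurableSet_ball]
  apply integral_congr_ae
  have hn : ∀ᵐ x : EuclideanSpace ℝ (Fin d), x ∉ Metric.sphere (0 : EuclideanSpace ℝ (Fin d)) 1 := by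
    rw [← measure_eq_zero_iff_ae_notMem]
    exact Measure.addHaar_sphere_of_ne_zero _ _ one_ne_zero
  filter_upwards [hn] with x hx
  by_cases hxb : x ∈ Metric.ball (0 : EuclideanSpace ℝ (Fin d)) 1
  · rw [indicator_of_mem hxb, ← (diffAt hf hxb).lineDeriv_eq_fderiv]
    apply Filter.EventuallyEq.lineDeriv_eq
    filter_upwards [cb_nhds hxb] with y hy
    rw [indicator_of_mem hy]
  · have hx' : x ∉ Metric.closedBall (0 : EuclideanSpace ℝ (Fin d)) 1 := by
      rw [← Metric.ball_union_sphere]; simp only [mem_union, not_or]; exact ⟨hxb, hx⟩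
    rw [indicator_of_notMem hxb]
    have : (indicator (Metric.closedBall (0 : EuclideanSpace ℝ (Fin d)) 1) f) =ᶠ[𝓝 x] fun _ => 0 := by
      filter_upwards [Metric.isClosed_closedBall.isOpen_compl.mem_nhds hx'] with y hy
      exact indicator_of_notMem hy f
    rw [this.lineDeriv_eq]
    simp [lineDeriv]

lemma inner_grad (x : EuclideanSpace ℝ (Fin d)) :
    ⟪gradient f x, gradient h x⟫ =
      ∑ i, fderiv ℝ f x (EuclideanSpace.single i 1) * fderiv ℝ h x (EuclideanSpace.single i 1) := by
  rw [← (EuclideanSpace.basisFun (Fin d) ℝ).sum_inner_mul_inner]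
  refine Finset.sum_congr rfl fun i _ => ?_
  rw [inner_gradient_left, inner_gradient_right]
  simp

lemma poincare (hd : 1 ≤ d) (hf : ContDiffOn ℝ 1 f (Metric.closedBall (0 : EuclideanSpace ℝ (Fin d)) 1))
    (h0 : ∀ x ∈ Metric.sphere (0 : EuclideanSpace ℝ (Fin d)) 1, f x = 0) :
    ∫ x in Metric.ball (0 : EuclideanSpace ℝ (Fin d)) 1, f x ^ 2 ≤
    4 * ∫ x in Metric.ball (0 : EuclideanSpace ℝ (Fin d)) 1, ⟪gradient f x, gradient f x⟫ := by
  set i : Fin d := ⟨0, hd⟩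
  set e : EuclideanSpace ℝ (Fin d) := EuclideanSpace.single i 1 with he
  let P : EuclideanSpace ℝ (Fin d) →L[ℝ] ℝ := EuclideanSpace.proj i
  have hP : ∀ x, P x = x i := fun x => rfl
  have hPe : P e = 1 := by simp [hP, he]
  have hc : ContDiffOn ℝ 1 (fun x => P x * (f x * f x))
      (Metric.closedBall (0 : EuclideanSpace ℝ (Fin d)) 1) :=
    P.contDiff.contDiffOn.mul (hf.mul hf)
  have h1 := int_fderiv_zero hc (fun x hx => by simp [h0 x hx]) e
  have cf : CE d f := .of_cont hf.continuousOn
  have cP : CE d P := .of_cont P.continuous.continuousOn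
  have cD : CE d (fun x => fderiv ℝ f x e) := CE.fderiv hf e
  have cI : CE d (fun x => ⟪gradient f x, gradient f x⟫) := by
    simp only [inner_grad]
    exact CE.sum fun i => (CE.fderiv hf _).mul (CE.fderiv hf _)
  have h2 : ∫ x in Metric.ball (0 : EuclideanSpace ℝ (Fin d)) 1,
      fderiv ℝ (fun x => P x * (f x * f x)) x e =
      ∫ x in Metric.ball (0 : EuclideanSpace ℝ (Fin d)) 1,
      (f x ^ 2 + 2 * (P x * (f x * fderiv ℝ f x e))) := by
    refine setIntegral_congr_fun measurableSet_ball fun x hx => ?_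
    have hd := (diffAt hf hx).hasFDerivAt
    have := (P.hasFDerivAt (x := x)).mul (hd.mul hd)
    have h3 := this.fderiv
    have h4 := congrArg (fun L : EuclideanSpace ℝ (Fin d) →L[ℝ] ℝ => L e) h3
    simp [hPe] at h4
    refine Eq.trans h4 ?_
    ring
  rw [h1] at h2
  have h5 : ∫ x in Metric.ball (0 : EuclideanSpace ℝ (Fin d)) 1, f x ^ 2 ≤
    ∫ x in Metric.ball (0 : EuclideanSpace ℝ (Fin d)) 1,
      (2 * (f x ^ 2 + 2 * (P x * (f x * fderiv ℝ f x e))) + 4 * ⟪gradient f x, gradient f x⟫) := by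
    refine setIntegral_mono_on (cf.pow 2).integrable ?_ measurableSet_ball fun x hx => ?_
    · exact CE.integrable (((CE.const 2).mul ((cf.pow 2).add ((CE.const 2).mul
        (cP.mul (cf.mul cD))))).add ((CE.const 4).mul cI))
    · have hD : (fderiv ℝ f x e) ^ 2 ≤ ⟪gradient f x, gradient f x⟫ := by
        rw [inner_grad, he, sq]
        exact Finset.single_le_sum (f := fun i => fderiv ℝ f x (EuclideanSpace.single i 1) *
          fderiv ℝ f x (EuclideanSpace.single i 1)) (fun i _ => mul_self_nonneg _) (Finset.mem_univ i)
      have hx1 : (P x) ^ 2 ≤ 1 := by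
        have : ‖x i‖ ≤ ‖x‖ := PiLp.norm_apply_le x i
        have h6 : ‖x‖ < 1 := by simpa using hx
        rw [hP, sq_le_one_iff_abs_le_one, ← Real.norm_eq_abs]
        linarith
      have h7 : (P x) ^ 2 * (fderiv ℝ f x e) ^ 2 ≤ (fderiv ℝ f x e) ^ 2 :=
        mul_le_of_le_one_left (sq_nonneg _) hx1
      nlinarith [sq_nonneg (f x + 2 * (P x * fderiv ℝ f x e))]
  have h8 : ∫ x in Metric.ball (0 : EuclideanSpace ℝ (Fin d)) 1,
      (2 * (f x ^ 2 + 2 * (P x * (f x * fderiv ℝ f x e))) + 4 * ⟪gradient f x, gradient f x⟫) =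
      2 * (∫ x in Metric.ball (0 : EuclideanSpace ℝ (Fin d)) 1,
      (f x ^ 2 + 2 * (P x * (f x * fderiv ℝ f x e)))) +
      4 * ∫ x in Metric.ball (0 : EuclideanSpace ℝ (Fin d)) 1, ⟪gradient f x, gradient f x⟫ := by
    rw [integral_add, integral_const_mul, integral_const_mul]
    · exact CE.integrable ((CE.const 2).mul ((cf.pow 2).add ((CE.const 2).mul
        (cP.mul (cf.mul cD)))))
    · exact CE.integrable ((CE.const 4).mul cI)
  rw [h8, ← h2] at h5
  linarith

/-- coordinate derivatives of a `C²` function, as functions on the closed ball -/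
lemma dcoord {u : EuclideanSpace ℝ (Fin d) → ℝ}
    (hu : ContDiffOn ℝ 2 u (Metric.closedBall (0 : EuclideanSpace ℝ (Fin d)) 1))
    (e : EuclideanSpace ℝ (Fin d)) :
    ∃ p : EuclideanSpace ℝ (Fin d) → ℝ,
      ContDiffOn ℝ 1 p (Metric.closedBall (0 : EuclideanSpace ℝ (Fin d)) 1) ∧
      ∀ x ∈ Metric.ball (0 : EuclideanSpace ℝ (Fin d)) 1, p x = fderiv ℝ u x e ∧
        fderiv ℝ p x e = iteratedFDeriv ℝ 2 u x ![e, e] := by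
  refine ⟨fun x => fderivWithin ℝ u (Metric.closedBall (0 : EuclideanSpace ℝ (Fin d)) 1) x e,
    (hu.fderivWithin uniq_ball (by norm_num)).clm_apply contDiffOn_const, fun x hx => ⟨?_, ?_⟩⟩
  · simp only [fderivWithin_of_mem_nhds (cb_nhds hx)]
  · have h1 : (fun x => fderivWithin ℝ u (Metric.closedBall (0 : EuclideanSpace ℝ (Fin d)) 1) x e)
        =ᶠ[𝓝 x] fun x => fderiv ℝ u x e := by
      filter_upwards [Metric.isOpen_ball.mem_nhds hx] with y hy
      rw [fderivWithin_of_mem_nhds (cb_nhds hy)]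
    rw [h1.fderiv_eq, iteratedFDeriv_two_apply]
    have h2 : DifferentiableAt ℝ (fderiv ℝ u) x :=
      ((hu.contDiffAt (cb_nhds hx)).fderiv_right (m := 1) (by norm_num)).differentiableAt (by simp)
    rw [fderiv_clm_apply h2 (by fun_prop)]
    simp

lemma CE.lapl {u : EuclideanSpace ℝ (Fin d) → ℝ}
    (hu : ContDiffOn ℝ 2 u (Metric.closedBall (0 : EuclideanSpace ℝ (Fin d)) 1)) :
    CE d (lapl u) := by
  refine CE.sum (f := fun i x => iteratedFDeriv ℝ 2 u x
    ![EuclideanSpace.single i 1, EuclideanSpace.single i 1]) fun i => ?_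
  obtain ⟨p, hp, hp'⟩ := dcoord hu (EuclideanSpace.single i 1)
  obtain ⟨F, hF, hF'⟩ := CE.fderiv hp (EuclideanSpace.single i 1)
  exact ⟨F, hF, fun x hx => (hp' x hx).2.symm.trans (hF' x hx)⟩

lemma green {u : EuclideanSpace ℝ (Fin d) → ℝ}
    (hu : ContDiffOn ℝ 2 u (Metric.closedBall (0 : EuclideanSpace ℝ (Fin d)) 1))
    (hf : ContDiffOn ℝ 1 f (Metric.closedBall (0 : EuclideanSpace ℝ (Fin d)) 1))
    (h0 : ∀ x ∈ Metric.sphere (0 : EuclideanSpace ℝ (Fin d)) 1, f x = 0) :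
    ∫ x in Metric.ball (0 : EuclideanSpace ℝ (Fin d)) 1, (⟪gradient u x, gradient f x⟫ + f x * lapl u x)
      = 0 := by
  choose p hp hp' using fun i : Fin d => dcoord hu (EuclideanSpace.single i 1)
  have h1 := fun i => int_fderiv_zero (hf.mul (hp i)) (fun x hx => by simp [h0 x hx])
    (EuclideanSpace.single i 1)
  have h2 : ∫ x in Metric.ball (0 : EuclideanSpace ℝ (Fin d)) 1,
      ∑ i, fderiv ℝ (fun x => f x * p i x) x (EuclideanSpace.single i 1) = 0 := by
    rw [integral_finsetSum _ fun i _ => (CE.fderiv (hf.mul (hp i)) _).integrable]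
    exact Finset.sum_eq_zero fun i _ => h1 i
  rw [← h2]
  refine setIntegral_congr_fun measurableSet_ball fun x hx => ?_
  simp only [inner_grad, _root_.lapl, Finset.mul_sum, ← Finset.sum_add_distrib]
  refine Finset.sum_congr rfl fun i _ => ?_
  have h3 := ((diffAt hf hx).hasFDerivAt.mul (diffAt (hp i) hx).hasFDerivAt).fderiv
  have h4 := congrArg (fun L : EuclideanSpace ℝ (Fin d) →L[ℝ] ℝ => L (EuclideanSpace.single i 1)) h3
  simp at h4
  refine Eq.trans ?_ h4.symm
  rw [(hp' i x hx).1, (hp' i x hx).2]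
  ring

/-- Bound on the constrained norm quotient by Young's inequality. -/
lemma knorm_le {g u v : EuclideanSpace ℝ (Fin d) → ℝ} (hg : MemKob d g u)
    (hu : ContDiffOn ℝ 2 u (Metric.closedBall (0 : EuclideanSpace ℝ (Fin d)) 1))
    (hv : MemKob d g v)
    (hne : (∫ x in Metric.ball (0 : EuclideanSpace ℝ (Fin d)) 1, (v x - u x) ^ 2) ≠ 0) :
    (∫ x in Metric.ball (0 : EuclideanSpace ℝ (Fin d)) 1, (v x - u x) * (lapl u x - 1)) /
      Real.sqrt (∫ x in Metric.ball (0 : EuclideanSpace ℝ (Fin d)) 1, (v x - u x) ^ 2)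
      ≤ KnormOb d g u := by
  unfold KnormOb
  refine le_trans ?_ (le_max_right _ _)
  refine le_csSup ?_ ⟨v, hv, hne, rfl⟩
  refine ⟨(1 + ∫ x in Metric.ball (0 : EuclideanSpace ℝ (Fin d)) 1, (lapl u x - 1) ^ 2) / 2, ?_⟩
  rintro r ⟨w, hw, hw0, rfl⟩
  have cw : CE d (fun x => w x - u x) := (CE.of_cont hw.1).sub (.of_cont hg.1)
  have cl : CE d (fun x => lapl u x - 1) := (CE.lapl hu).sub (.const 1)
  have hA : 0 ≤ ∫ x in Metric.ball (0 : EuclideanSpace ℝ (Fin d)) 1, (w x - u x) ^ 2 :=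
    integral_nonneg fun x => sq_nonneg _
  set A := ∫ x in Metric.ball (0 : EuclideanSpace ℝ (Fin d)) 1, (w x - u x) ^ 2
  set s := Real.sqrt A with hs
  have hs0 : 0 < s := Real.sqrt_pos.2 (lt_of_le_of_ne hA (Ne.symm hw0))
  have hss : s * s = A := Real.mul_self_sqrt hA
  rw [div_le_iff₀ hs0]
  have h1 : ∫ x in Metric.ball (0 : EuclideanSpace ℝ (Fin d)) 1, (w x - u x) * (lapl u x - 1) ≤
      ∫ x in Metric.ball (0 : EuclideanSpace ℝ (Fin d)) 1,
        (1 / (2 * s) * (w x - u x) ^ 2 + s / 2 * (lapl u x - 1) ^ 2) := by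
    refine setIntegral_mono_on (cw.mul cl).integrable
      (((CE.const _).mul (cw.pow 2)).add ((CE.const _).mul (cl.pow 2))).integrable
      measurableSet_ball fun x _ => ?_
    have : 1 / (2 * s) * (w x - u x) ^ 2 + s / 2 * (lapl u x - 1) ^ 2
      - (w x - u x) * (lapl u x - 1) = ((w x - u x) - s * (lapl u x - 1)) ^ 2 / (2 * s) := by
      field_simp
      ring
    have h2 : 0 ≤ ((w x - u x) - s * (lapl u x - 1)) ^ 2 / (2 * s) := by positivity
    linarith
  rw [integral_add ((CE.const _).mul (cw.pow 2)).integrable ((CE.const _).mul (cl.pow 2)).integrable,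
    integral_const_mul, integral_const_mul] at h1
  refine h1.trans (le_of_eq ?_)
  change 1 / (2 * s) * A + _ = _
  rw [← hss]
  field_simp

end

/-- **Constrained Łojasiewicz inequality (exponent 1/2) for the obstacle problem.**
There is `C > 0`, depending only on `d`, such that for every nonnegative continuous boundary
datum `g`, every solution `φ` of the obstacle problem with datum `g`, and every `u ∈ K_ob`
of class `C²` on the closed ball: `F_ob(u) ≥ F_ob(φ)` and
`(F_ob(u) - F_ob(φ))^{1/2} ≤ C ‖∇F_ob(u)‖_K`. -/
theorem constrained_loja_obstacle (d : ℕ) (hd : 1 ≤ d) :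
    ∃ C > (0:ℝ), ∀ g φ : EuclideanSpace ℝ (Fin d) → ℝ,
      ContinuousOn g (Metric.closedBall (0 : EuclideanSpace ℝ (Fin d)) 1) →
      (∀ x ∈ Metric.closedBall (0 : EuclideanSpace ℝ (Fin d)) 1, 0 ≤ g x) →
      MemKob d g φ →
      ContDiffOn ℝ 1 φ (Metric.closedBall (0 : EuclideanSpace ℝ (Fin d)) 1) →
      (∀ ψ : EuclideanSpace ℝ (Fin d) → ℝ,
        ContDiffOn ℝ 1 ψ (Metric.closedBall (0 : EuclideanSpace ℝ (Fin d)) 1) →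
        (∀ x ∈ Metric.sphere (0 : EuclideanSpace ℝ (Fin d)) 1, ψ x = 0) →
        (∫ x in Metric.ball (0 : EuclideanSpace ℝ (Fin d)) 1, ⟪gradient φ x, gradient ψ x⟫) =
          -∫ x in Metric.ball (0 : EuclideanSpace ℝ (Fin d)) 1 ∩ {y | 0 < φ y}, ψ x) →
      ∀ u : EuclideanSpace ℝ (Fin d) → ℝ, MemKob d g u →
        ContDiffOn ℝ 2 u (Metric.closedBall (0 : EuclideanSpace ℝ (Fin d)) 1) →
        Fob d φ ≤ Fob d u ∧ Real.sqrt (Fob d u - Fob d φ) ≤ C * KnormOb d g u := by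
  refine ⟨2, two_pos, ?_⟩
  intro g φ _ _ hφ hφ1 hEL u hu hu2
  have hu1 : ContDiffOn ℝ 1 u (Metric.closedBall (0 : EuclideanSpace ℝ (Fin d)) 1) :=
    hu2.of_le (by norm_num)
  set w : EuclideanSpace ℝ (Fin d) → ℝ := fun x => u x - φ x with hw
  have hw1 : ContDiffOn ℝ 1 w (Metric.closedBall (0 : EuclideanSpace ℝ (Fin d)) 1) := hu1.sub hφ1
  have hw0 : ∀ x ∈ Metric.sphere (0 : EuclideanSpace ℝ (Fin d)) 1, w x = 0 := fun x hx => by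
    simp only [hw, hu.2.2 x hx, hφ.2.2 x hx, sub_self]
  have cI : ∀ {a b : EuclideanSpace ℝ (Fin d) → ℝ},
      ContDiffOn ℝ 1 a (Metric.closedBall (0 : EuclideanSpace ℝ (Fin d)) 1) →
      ContDiffOn ℝ 1 b (Metric.closedBall (0 : EuclideanSpace ℝ (Fin d)) 1) →
      CE d (fun x => ⟪gradient a x, gradient b x⟫) := by
    intro a b ha hb
    simp only [inner_grad]
    exact CE.sum fun i => (CE.fderiv ha _).mul (CE.fderiv hb _)
  have cu : CE d u := .of_cont hu.1
  have cφ : CE d φ := .of_cont hφ.1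
  have cw : CE d w := .of_cont hw1.continuousOn
  have cl : CE d (lapl u) := CE.lapl hu2
  -- gradient of the difference
  have hgr : ∀ x ∈ Metric.ball (0 : EuclideanSpace ℝ (Fin d)) 1,
      gradient u x = gradient φ x + gradient w x := by
    intro x hx
    have h1 : fderiv ℝ w x = fderiv ℝ u x - fderiv ℝ φ x :=
      fderiv_sub (diffAt hu1 hx) (diffAt hφ1 hx)
    simp only [gradient, h1, map_sub]
    abel
  have hEw := hEL w hw1 hw0
  have hG := green hu2 hw1 hw0
  have hPo := poincare hd hw1 hw0
  have hIu : ∫ x in Metric.ball (0 : EuclideanSpace ℝ (Fin d)) 1, ‖gradient u x‖ ^ 2 =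
      (∫ x in Metric.ball (0 : EuclideanSpace ℝ (Fin d)) 1, ‖gradient φ x‖ ^ 2) +
      2 * (∫ x in Metric.ball (0 : EuclideanSpace ℝ (Fin d)) 1, ⟪gradient φ x, gradient w x⟫) +
      ∫ x in Metric.ball (0 : EuclideanSpace ℝ (Fin d)) 1, ⟪gradient w x, gradient w x⟫ := by
    simp only [← real_inner_self_eq_norm_sq]
    rw [← integral_const_mul, ← integral_add (cI hφ1 hφ1).integrable
      ((CE.const 2).mul (cI hφ1 hw1)).integrable,
      ← integral_add ((cI hφ1 hφ1).add ((CE.const 2).mul (cI hφ1 hw1))).integrable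
      (cI hw1 hw1).integrable]
    refine setIntegral_congr_fun measurableSet_ball fun x hx => ?_
    simp only [hgr x hx, inner_add_left, inner_add_right]
    rw [real_inner_comm (gradient φ x) (gradient w x)]
    ring
  have hIw : ∫ x in Metric.ball (0 : EuclideanSpace ℝ (Fin d)) 1, w x =
      (∫ x in Metric.ball (0 : EuclideanSpace ℝ (Fin d)) 1, u x) -
      ∫ x in Metric.ball (0 : EuclideanSpace ℝ (Fin d)) 1, φ x :=
    integral_sub cu.integrable cφ.integrable
  have hQ : (∫ x in Metric.ball (0 : EuclideanSpace ℝ (Fin d)) 1, ⟪gradient φ x, gradient w x⟫) +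
      (∫ x in Metric.ball (0 : EuclideanSpace ℝ (Fin d)) 1, ⟪gradient w x, gradient w x⟫) +
      (∫ x in Metric.ball (0 : EuclideanSpace ℝ (Fin d)) 1, w x * lapl u x) = 0 := by
    rw [← hG, ← integral_add (cI hφ1 hw1).integrable (cI hw1 hw1).integrable,
      ← integral_add ((cI hφ1 hw1).add (cI hw1 hw1)).integrable (cw.mul cl).integrable]
    refine setIntegral_congr_fun measurableSet_ball fun x hx => ?_
    simp only [hgr x hx, inner_add_left]
  have hR : ∫ x in Metric.ball (0 : EuclideanSpace ℝ (Fin d)) 1, (φ x - u x) * (lapl u x - 1) =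
      (∫ x in Metric.ball (0 : EuclideanSpace ℝ (Fin d)) 1, w x) -
      ∫ x in Metric.ball (0 : EuclideanSpace ℝ (Fin d)) 1, w x * lapl u x := by
    rw [← integral_sub cw.integrable (cw.mul cl).integrable]
    refine setIntegral_congr_fun measurableSet_ball fun x hx => ?_
    simp only [hw]
    ring
  have hS : ∫ x in Metric.ball (0 : EuclideanSpace ℝ (Fin d)) 1, (φ x - u x) ^ 2 =
      ∫ x in Metric.ball (0 : EuclideanSpace ℝ (Fin d)) 1, w x ^ 2 := by
    refine setIntegral_congr_fun measurableSet_ball fun x hx => ?_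
    simp only [hw]
    ring
  have hD0 : 0 ≤ ∫ x in Metric.ball (0 : EuclideanSpace ℝ (Fin d)) 1,
      ⟪gradient w x, gradient w x⟫ := integral_nonneg fun x => real_inner_self_nonneg
  have hF : Fob d u - Fob d φ =
      (∫ x in Metric.ball (0 : EuclideanSpace ℝ (Fin d)) 1, ⟪gradient φ x, gradient w x⟫) +
      1 / 2 * (∫ x in Metric.ball (0 : EuclideanSpace ℝ (Fin d)) 1, ⟪gradient w x, gradient w x⟫) +
      ∫ x in Metric.ball (0 : EuclideanSpace ℝ (Fin d)) 1, w x := by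
    unfold Fob
    rw [hIu, hIw]
    ring
  -- the positivity set
  have hopen : IsOpen (Metric.ball (0 : EuclideanSpace ℝ (Fin d)) 1 ∩ {y | 0 < φ y}) :=
    (hφ.1.mono Metric.ball_subset_closedBall).isOpen_inter_preimage Metric.isOpen_ball isOpen_Ioi
  have hsplit : 0 ≤ (∫ x in Metric.ball (0 : EuclideanSpace ℝ (Fin d)) 1, w x) -
      ∫ x in Metric.ball (0 : EuclideanSpace ℝ (Fin d)) 1 ∩ {y | 0 < φ y}, w x := by
    rw [← setIntegral_sdiff hopen.measurableSet cw.integrable inter_subset_left]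
    refine setIntegral_nonneg (measurableSet_ball.diff hopen.measurableSet) fun x hx => ?_
    have h1 : ¬ 0 < φ x := fun h => hx.2 ⟨hx.1, h⟩
    have h2 := hu.2.1 x hx.1
    simp only [hw]
    linarith
  refine ⟨by linarith, ?_⟩
  have hN0 : 0 ≤ KnormOb d g u := le_max_left _ _
  set N := KnormOb d g u with hN
  have hS0 : 0 ≤ ∫ x in Metric.ball (0 : EuclideanSpace ℝ (Fin d)) 1, w x ^ 2 :=
    integral_nonneg fun x => sq_nonneg _
  have hmain : ∫ x in Metric.ball (0 : EuclideanSpace ℝ (Fin d)) 1, (φ x - u x) * (lapl u x - 1) ≤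
      N * Real.sqrt (∫ x in Metric.ball (0 : EuclideanSpace ℝ (Fin d)) 1, w x ^ 2) := by
    by_cases hz : ∫ x in Metric.ball (0 : EuclideanSpace ℝ (Fin d)) 1, w x ^ 2 = 0
    · have h1 : (fun x => w x ^ 2) =ᵐ[volume.restrict
          (Metric.ball (0 : EuclideanSpace ℝ (Fin d)) 1)] 0 :=
        (integral_eq_zero_iff_of_nonneg (fun x => sq_nonneg _) (cw.pow 2).integrable).1 hz
      have h2 : ∫ x in Metric.ball (0 : EuclideanSpace ℝ (Fin d)) 1,
          (φ x - u x) * (lapl u x - 1) = 0 := by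
        refine integral_eq_zero_of_ae ?_
        filter_upwards [h1] with x hx
        have h3 : w x = 0 := by simpa using hx
        have h4 : φ x - u x = 0 := by simp only [hw] at h3; linarith
        simp [h4]
      rw [h2]
      positivity
    · have h1 := knorm_le hu hu2 hφ (by rw [hS]; exact hz)
      rw [hS, div_le_iff₀ (Real.sqrt_pos.2 (lt_of_le_of_ne hS0 (Ne.symm hz)))] at h1
      exact h1
  have hsq := Real.mul_self_sqrt hS0
  set s := Real.sqrt (∫ x in Metric.ball (0 : EuclideanSpace ℝ (Fin d)) 1, w x ^ 2)
  apply Real.sqrt_le_iff.2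
  refine ⟨by positivity, ?_⟩
  nlinarith [sq_nonneg (s - 4 * N), sq_nonneg N]
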